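/- Let V be a module over the N=2 Ramond algebra 𝔤 with c₀ = 0, let a, b, c ∈ ℂ, and let (u_i)_{i∈ℤ} be vectors in V such that L_m u_i = (a + bm + i)u_{m+i}, H_m u_i = c·u_{m+i}, and G_m^- u_i = 0 for all m, i ∈ ℤ. Then for all r₁, r₂, r₃, s₁, s₂, s₃, i ∈ ℤ: G_{r₁}^- G_{r₂}^- G_{r₃}^- G_{s₁}^+ G_{s₂}^+ G_{s₃}^+ u_i = 0. -/

import Mathlib

open Submodule

/-- A module over the `N = 2` Ramond algebra `𝔤`: a `ℤ/2`-graded complex vector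
space `V = even ⊕ odd` with parity-preserving operators `L m`, `H m`,
parity-reversing operators `Gp m` (`G_m^+`), `Gm m` (`G_m^-`), and a scalar `c₀`
(the action of the central element `C`), subject to the defining relations. -/
structure RamondRep (V : Type) [AddCommGroup V] [Module ℂ V] : Type where
  L : ℤ → V →ₗ[ℂ] V
  H : ℤ → V →ₗ[ℂ] V
  Gp : ℤ → V →ₗ[ℂ] V
  Gm : ℤ → V →ₗ[ℂ] V
  c₀ : ℂ
  even : Submodule ℂ V
  odd : Submodule ℂ V
  grading : IsCompl even odd
  L_even : ∀ (m : ℤ), ∀ v ∈ even, L m v ∈ even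
  L_odd : ∀ (m : ℤ), ∀ v ∈ odd, L m v ∈ odd
  H_even : ∀ (m : ℤ), ∀ v ∈ even, H m v ∈ even
  H_odd : ∀ (m : ℤ), ∀ v ∈ odd, H m v ∈ odd
  Gp_even : ∀ (m : ℤ), ∀ v ∈ even, Gp m v ∈ odd
  Gp_odd : ∀ (m : ℤ), ∀ v ∈ odd, Gp m v ∈ even
  Gm_even : ∀ (m : ℤ), ∀ v ∈ even, Gm m v ∈ odd
  Gm_odd : ∀ (m : ℤ), ∀ v ∈ odd, Gm m v ∈ even
  rel_LL : ∀ (m n : ℤ) (v : V),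
    L m (L n v) - L n (L m v) =
      ((n : ℂ) - (m : ℂ)) • L (m + n) v +
        ((1 / 12 : ℂ) * ((n : ℂ) ^ 3 - (n : ℂ)) *
          (if m + n = 0 then (1 : ℂ) else 0) * c₀) • v
  rel_HH : ∀ (m n : ℤ) (v : V),
    H m (H n v) - H n (H m v) =
      ((1 / 3 : ℂ) * (m : ℂ) * (if m + n = 0 then (1 : ℂ) else 0) * c₀) • v
  rel_LH : ∀ (m n : ℤ) (v : V),
    L m (H n v) - H n (L m v) = (n : ℂ) • H (m + n) v
  rel_LGp : ∀ (m p : ℤ) (v : V),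
    L m (Gp p v) - Gp p (L m v) = ((p : ℂ) - (m : ℂ) / 2) • Gp (p + m) v
  rel_LGm : ∀ (m p : ℤ) (v : V),
    L m (Gm p v) - Gm p (L m v) = ((p : ℂ) - (m : ℂ) / 2) • Gm (p + m) v
  rel_HGp : ∀ (m p : ℤ) (v : V),
    H m (Gp p v) - Gp p (H m v) = Gp (m + p) v
  rel_HGm : ∀ (m p : ℤ) (v : V),
    H m (Gm p v) - Gm p (H m v) = -(Gm (m + p) v)
  rel_GpGm : ∀ (p q : ℤ) (v : V),
    Gp p (Gm q v) + Gm q (Gp p v) =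
      (-2 : ℂ) • L (p + q) v + ((p : ℂ) - (q : ℂ)) • H (p + q) v +
        ((1 / 3 : ℂ) * ((p : ℂ) ^ 2 - 1 / 4) *
          (if p + q = 0 then (1 : ℂ) else 0) * c₀) • v
  rel_GpGp : ∀ (p q : ℤ) (v : V), Gp p (Gp q v) + Gp q (Gp p v) = 0
  rel_GmGm : ∀ (p q : ℤ) (v : V), Gm p (Gm q v) + Gm q (Gm p v) = 0

namespace RamondRep

variable {V : Type} [AddCommGroup V] [Module ℂ V]

/-- The weight space `V_μ = {v ∈ V : L₀ v = μ v}`. -/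
def wt (ρ : RamondRep V) (μ : ℂ) : Submodule ℂ V :=
  Module.End.eigenspace (ρ.L 0) μ

/-- The parity components, indexed by `ZMod 2`. -/
def parity (ρ : RamondRep V) (τ : ZMod 2) : Submodule ℂ V :=
  if τ = 0 then ρ.even else ρ.odd

/-- `V` is a weight module: it is the sum of its weight spaces. -/
def IsWeight (ρ : RamondRep V) : Prop := (⨆ μ : ℂ, ρ.wt μ) = ⊤

/-- `V` is cuspidal: a weight module with uniformly bounded weight multiplicities
in each parity. -/
def Cuspidal (ρ : RamondRep V) : Prop :=
  ρ.IsWeight ∧ ∃ p : ℕ, ∀ (μ : ℂ) (τ : ZMod 2),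
    Module.rank ℂ ↥(ρ.wt μ ⊓ ρ.parity τ) ≤ (p : Cardinal)

/-- A subspace invariant under all the operators. -/
def IsSubmod (ρ : RamondRep V) (W : Submodule ℂ V) : Prop :=
  (∀ (m : ℤ), ∀ v ∈ W, ρ.L m v ∈ W) ∧ (∀ (m : ℤ), ∀ v ∈ W, ρ.H m v ∈ W) ∧
    (∀ (m : ℤ), ∀ v ∈ W, ρ.Gp m v ∈ W) ∧ (∀ (m : ℤ), ∀ v ∈ W, ρ.Gm m v ∈ W)

/-- A graded subspace invariant under all the operators. -/
def IsGradedSubmod (ρ : RamondRep V) (W : Submodule ℂ V) : Prop :=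
  ρ.IsSubmod W ∧ W = (W ⊓ ρ.even) ⊔ (W ⊓ ρ.odd)

/-- The trivial representation: all operators act by zero. -/
def IsTrivialRep (ρ : RamondRep V) : Prop :=
  ∀ (m : ℤ) (v : V), ρ.L m v = 0 ∧ ρ.H m v = 0 ∧ ρ.Gp m v = 0 ∧ ρ.Gm m v = 0

/-- `V` is simple: nontrivial, and its only graded submodules are `⊥` and `⊤`. -/
def IsSimple (ρ : RamondRep V) : Prop :=
  ¬ ρ.IsTrivialRep ∧
    ∀ W : Submodule ℂ V, ρ.IsGradedSubmod W → W = ⊥ ∨ W = ⊤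

/-- `V` is generated by `v` as a `𝔤`-module. -/
def GeneratedBy (ρ : RamondRep V) (v : V) : Prop :=
  ∀ W : Submodule ℂ V, ρ.IsSubmod W → v ∈ W → W = ⊤

/-- `V` is a highest weight module. -/
def IsHighestWeight (ρ : RamondRep V) : Prop :=
  ∃ v : V, v ≠ 0 ∧ ρ.GeneratedBy v ∧
    (∃ h h' : ℂ, ρ.L 0 v = h • v ∧ ρ.H 0 v = h' • v) ∧
    (∀ m : ℤ, 0 < m → ρ.L m v = 0 ∧ ρ.H m v = 0 ∧ ρ.Gp m v = 0 ∧ ρ.Gm m v = 0) ∧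
    ρ.Gp 0 v = 0

/-- `V` is a lowest weight module. -/
def IsLowestWeight (ρ : RamondRep V) : Prop :=
  ∃ v : V, v ≠ 0 ∧ ρ.GeneratedBy v ∧
    (∃ h h' : ℂ, ρ.L 0 v = h • v ∧ ρ.H 0 v = h' • v) ∧
    (∀ m : ℤ, m < 0 → ρ.L m v = 0 ∧ ρ.H m v = 0 ∧ ρ.Gp m v = 0 ∧ ρ.Gm m v = 0) ∧
    ρ.Gm 0 v = 0

end RamondRep

/-- Lemma 4.3 of the paper. If `(u i)` satisfies
`L_m u_i = (a + bm + i) u_{m+i}`, `H_m u_i = c u_{m+i}`, `G_m^- u_i = 0`, then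
`G_{r₁}^- G_{r₂}^- G_{r₃}^- G_{s₁}^+ G_{s₂}^+ G_{s₃}^+ u_i = 0`. -/
theorem stmt10 {V : Type} [AddCommGroup V] [Module ℂ V] (ρ : RamondRep V)
    (hc : ρ.c₀ = 0) (a b c : ℂ) (u : ℤ → V)
    (hL : ∀ m i : ℤ, ρ.L m (u i) = (a + b * (m : ℂ) + (i : ℂ)) • u (m + i))
    (hH : ∀ m i : ℤ, ρ.H m (u i) = c • u (m + i))
    (hG : ∀ m i : ℤ, ρ.Gm m (u i) = 0) :
    ∀ r₁ r₂ r₃ s₁ s₂ s₃ i : ℤ,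
      ρ.Gm r₁ (ρ.Gm r₂ (ρ.Gm r₃ (ρ.Gp s₁ (ρ.Gp s₂ (ρ.Gp s₃ (u i)))))) = 0 := by
  have gg : ∀ (r s : ℤ) (v : V), ρ.Gm r (ρ.Gp s v) =
      (-2 : ℂ) • ρ.L (s + r) v + ((s : ℂ) - (r : ℂ)) • ρ.H (s + r) v - ρ.Gp s (ρ.Gm r v) := by
    intro r s v
    have h := ρ.rel_GpGm s r v
    rw [hc, mul_zero, zero_smul, add_zero] at h
    rw [← h]; abel
  have lg : ∀ (m p : ℤ) (v : V), ρ.L m (ρ.Gp p v) =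
      ((p : ℂ) - (m : ℂ) / 2) • ρ.Gp (p + m) v + ρ.Gp p (ρ.L m v) := by
    intro m p v
    rw [← ρ.rel_LGp]; abel
  have hg : ∀ (m p : ℤ) (v : V), ρ.H m (ρ.Gp p v) =
      ρ.Gp (m + p) v + ρ.Gp p (ρ.H m v) := by
    intro m p v
    rw [← ρ.rel_HGp]; abel
  have A1 : ∀ r s i N : ℤ, N = r + s + i → ρ.Gm r (ρ.Gp s (u i)) =
      (-2 * (a + b * (s + r) + i) + (s - r) * c : ℂ) • u N := by
    intro r s i N hN
    rw [gg, hG, hL, hH, show s + r + i = N by omega, map_zero]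
    push_cast
    module
  have A2 : ∀ r s t i : ℤ, ρ.Gm r (ρ.Gp s (ρ.Gp t (u i))) =
      (-2 * (t - (s + r) / 2) + (s - r) : ℂ) • ρ.Gp (t + (s + r)) (u i)
      + (-2 * (a + b * (s + r) + i) + (s - r) * c : ℂ) • ρ.Gp t (u (s + r + i))
      - (-2 * (a + b * (t + r) + i) + (t - r) * c : ℂ) • ρ.Gp s (u (r + t + i)) := by
    intro r s t i
    rw [gg, A1 r t i _ rfl, lg, hg, hL, hH, add_comm (s + r) t]
    simp only [map_smul]
    push_cast
    module
  have A3 : ∀ r s t w i : ℤ, ρ.Gm r (ρ.Gp s (ρ.Gp t (ρ.Gp w (u i)))) =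
      (-2 * (t - (s + r) / 2) + (s - r) : ℂ) • ρ.Gp (t + (s + r)) (ρ.Gp w (u i))
      + (-2 * (w - (s + r) / 2) + (s - r) : ℂ) • ρ.Gp t (ρ.Gp (w + (s + r)) (u i))
      + (-2 * (a + b * (s + r) + i) + (s - r) * c : ℂ) • ρ.Gp t (ρ.Gp w (u (s + r + i)))
      - (-2 * (w - (t + r) / 2) + (t - r) : ℂ) • ρ.Gp s (ρ.Gp (w + (t + r)) (u i))
      - (-2 * (a + b * (t + r) + i) + (t - r) * c : ℂ) • ρ.Gp s (ρ.Gp w (u (t + r + i)))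
      + (-2 * (a + b * (w + r) + i) + (w - r) * c : ℂ) • ρ.Gp s (ρ.Gp t (u (r + w + i))) := by
    intro r s t w i
    rw [gg, A2, lg, hg, lg, hg, hL, hH, add_comm (s + r) t, add_comm (s + r) w]
    simp only [map_smul, map_add, map_sub]
    push_cast
    module
  have A4 : ∀ q r s t i N : ℤ, N = q + r + s + t + i →
      ρ.Gm q (ρ.Gm r (ρ.Gp s (ρ.Gp t (u i)))) =
      ((-2 * (t - (s + r) / 2) + (s - r)) *
          (-2 * (a + b * (t + (s + r) + q) + i) + (t + (s + r) - q) * c)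
      + (-2 * (a + b * (s + r) + i) + (s - r) * c) *
          (-2 * (a + b * (t + q) + (s + r + i)) + (t - q) * c)
      - (-2 * (a + b * (t + r) + i) + (t - r) * c) *
          (-2 * (a + b * (s + q) + (r + t + i)) + (s - q) * c) : ℂ) • u N := by
    intro q r s t i N hN
    rw [A2]
    simp only [map_smul, map_add, map_sub]
    rw [A1 _ _ _ N (by omega), A1 _ _ _ N (by omega), A1 _ _ _ N (by omega)]
    push_cast
    module
  intro q r p s t w i
  rw [A3]
  simp only [map_smul, map_add, map_sub]
  obtain ⟨N, hN⟩ : ∃ N, N = q + r + p + s + t + w + i := ⟨_, rfl⟩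
  rw [A4 _ _ _ _ _ N (by omega), A4 _ _ _ _ _ N (by omega), A4 _ _ _ _ _ N (by omega),
    A4 _ _ _ _ _ N (by omega), A4 _ _ _ _ _ N (by omega), A4 _ _ _ _ _ N (by omega)]
  simp only [smul_smul, ← add_smul, ← sub_smul]
  convert zero_smul ℂ (u N) using 2
  push_cast
  ring
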